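/- arXiv:math-ph/0408053 — 2 statements merged into one kernel-verified Lean document; each statement's English description precedes it below -/
import Mathlib

section
/- For all i, j, r, k ∈ ℤ_{≥0}, the elements E_{i,j} = Z_{i,j} − Z_{i+1,j+1} of L_L satisfy the matrix-unit commutation relations [E_{i,j}, E_{r,k}] = δ_{j,r} E_{i,k} − δ_{k,i} E_{r,j}. -/
/- The ladder insertion-elimination Lie algebra `L_L` of Mencattini–Kreimer,
realized as the complex vector space of finitely supported functions `ℕ × ℕ → ℂ`,
with basis elements `Z n m = single (n, m) 1` and the bilinear bracket determined
on basis elements by formula (e1). -/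

noncomputable section

/-- The underlying vector space of the ladder insertion-elimination Lie algebra. -/
abbrev LL : Type := (ℕ × ℕ) →₀ ℂ

/-- The basis element `Z_{n,m}`. -/
def Z (n m : ℕ) : LL := Finsupp.single (n, m) 1

/-- `Θ(k) = 1` if `k ≥ 0`, and `0` otherwise. -/
def theta (k : ℤ) : ℂ := if 0 ≤ k then 1 else 0

/-- The Kronecker delta `δ_{n,m}`. -/
def kdelta (n m : ℕ) : ℂ := if n = m then 1 else 0

/-- Formula (e1) for the bracket `[Z_{n,m}, Z_{l,s}]` on basis elements, where
`p = (n, m)` and `q = (l, s)`.  (The natural subtractions occurring in the indices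
are truncated, but every such term is multiplied by a `theta` coefficient which
vanishes whenever truncation would occur.) -/
def zb (p q : ℕ × ℕ) : LL :=
  theta ((q.1 : ℤ) - p.2) • Z (q.1 - p.2 + p.1) q.2
    - theta ((q.2 : ℤ) - p.1) • Z q.1 (q.2 - p.1 + p.2)
    - theta ((p.1 : ℤ) - q.2) • Z (p.1 - q.2 + q.1) p.2
    + theta ((p.2 : ℤ) - q.1) • Z p.1 (p.2 - q.1 + q.2)
    - kdelta p.2 q.1 • Z p.1 q.2 + kdelta p.1 q.2 • Z q.1 p.2

/-- The bilinear extension of formula (e1) to all of `L_L`. -/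
def br (x y : LL) : LL :=
  x.sum fun p a => y.sum fun q b => (a * b) • zb p q

end

/-- The element `E_{i,j} = Z_{i,j} − Z_{i+1,j+1}` of `L_L`. -/
noncomputable def E (i j : ℕ) : LL := Z i j - Z (i + 1) (j + 1)

/-! The algebra generated by `a`, `b` with `b * a = 1` is spanned by the monomials `a ^ n * b ^ m`,
and `b ^ m * a ^ l = a ^ (l - m) * b ^ (m - l)`, with truncated subtraction in both exponents (one
of which therefore vanishes), shows that formula (e1) is the commutator of
`Z_{n,m} = a ^ n * b ^ m` and `Z_{l,s} = a ^ l * b ^ s`. In these terms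
`E_{i,j} = a ^ i * (1 - a * b) * b ^ j`, and since `1 - a * b` is an idempotent killed by `b` on the
left and by `a` on the right, these are matrix units. The identity is pulled back to `L_L` along an
injective realization, in the monoid algebra of the bicyclic monoid. -/

section OneSidedInverse

lemma pow_mul_pow_of_mul_eq_one {M : Type*} [Monoid M] {a b : M} (hba : b * a = 1) (m l : ℕ) :
    b ^ m * a ^ l = a ^ (l - m) * b ^ (m - l) := by
  rcases le_total m l with h | h
  · obtain ⟨d, rfl⟩ := Nat.exists_eq_add_of_le h
    simp [pow_add, ← mul_assoc, pow_mul_pow_eq_one m hba]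
  · obtain ⟨d, rfl⟩ := Nat.exists_eq_add_of_le' h
    simp [pow_add, mul_assoc, pow_mul_pow_eq_one l hba]

variable {R : Type*} [Ring R]

/-- The elements `a ^ i * (1 - a * b) * b ^ j` of a ring, which form a system of matrix units when
`b` is a left inverse of `a`. -/
def shiftMatrixUnit (a b : R) (i j : ℕ) : R :=
  a ^ i * (1 - a * b) * b ^ j

lemma shiftMatrixUnit_eq_sub (a b : R) (i j : ℕ) :
    shiftMatrixUnit a b i j = a ^ i * b ^ j - a ^ (i + 1) * b ^ (j + 1) := by
  simp only [shiftMatrixUnit, pow_succ a, pow_succ' b, mul_sub, sub_mul, mul_one, mul_assoc]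

variable {a b : R}

lemma isIdempotentElem_one_sub_mul (hba : b * a = 1) : IsIdempotentElem (1 - a * b) := by
  refine IsIdempotentElem.one_sub ?_
  calc a * b * (a * b) = a * (b * a) * b := by simp only [mul_assoc]
    _ = a * b := by rw [hba, mul_one]

lemma one_sub_mul_mul_pow_succ (hba : b * a = 1) (n : ℕ) : (1 - a * b) * a ^ (n + 1) = 0 := by
  rw [pow_succ', ← mul_assoc, sub_mul, mul_assoc a, hba, mul_one, one_mul, sub_self, zero_mul]

lemma pow_succ_mul_one_sub_mul (hba : b * a = 1) (n : ℕ) : b ^ (n + 1) * (1 - a * b) = 0 := by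
  rw [pow_succ, mul_assoc, mul_sub, ← mul_assoc b, hba, mul_one, one_mul, sub_self, mul_zero]

lemma one_sub_mul_mul_pow_mul_pow_mul (hba : b * a = 1) (j r : ℕ) :
    (1 - a * b) * (b ^ j * a ^ r) * (1 - a * b) = if j = r then 1 - a * b else 0 := by
  rw [pow_mul_pow_of_mul_eq_one hba]
  rcases lt_trichotomy j r with h | rfl | h
  · obtain ⟨d, rfl⟩ := Nat.exists_eq_add_of_lt h
    rw [if_neg h.ne, ← mul_assoc, add_assoc, Nat.add_sub_cancel_left,
      one_sub_mul_mul_pow_succ hba, zero_mul, zero_mul]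
  · simpa using (isIdempotentElem_one_sub_mul hba).eq
  · obtain ⟨d, rfl⟩ := Nat.exists_eq_add_of_lt h
    rw [if_neg h.ne', mul_assoc, mul_assoc, add_assoc, Nat.add_sub_cancel_left,
      pow_succ_mul_one_sub_mul hba, mul_zero, mul_zero]

theorem shiftMatrixUnit_mul (hba : b * a = 1) (i j r k : ℕ) :
    shiftMatrixUnit a b i j * shiftMatrixUnit a b r k =
      if j = r then shiftMatrixUnit a b i k else 0 := by
  calc shiftMatrixUnit a b i j * shiftMatrixUnit a b r k
      = a ^ i * ((1 - a * b) * (b ^ j * a ^ r) * (1 - a * b)) * b ^ k := by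
        simp only [shiftMatrixUnit, mul_assoc]
    _ = if j = r then shiftMatrixUnit a b i k else 0 := by
        rw [one_sub_mul_mul_pow_mul_pow_mul hba, mul_ite, ite_mul, mul_zero, zero_mul,
          shiftMatrixUnit]

end OneSidedInverse

section BicyclicMonoid

/-- The bicyclic monoid, presented by generators `a`, `b` and the relation `b * a = 1`. Its element
`⟨n, m⟩` is the normal form `a ^ n * b ^ m`. -/
structure Bicyclic where
  /-- The exponent of `a`. -/
  left : ℕ
  /-- The exponent of `b`. -/
  right : ℕ

namespace Bicyclic

instance : Mul Bicyclic where
  mul x y := ⟨x.left + (y.left - x.right), y.right + (x.right - y.left)⟩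

instance : One Bicyclic where
  one := ⟨0, 0⟩

lemma mk_mul_mk (n m l s : ℕ) :
    (⟨n, m⟩ * ⟨l, s⟩ : Bicyclic) = ⟨n + (l - m), s + (m - l)⟩ :=
  rfl

lemma one_eq_mk : (1 : Bicyclic) = ⟨0, 0⟩ :=
  rfl

instance : Monoid Bicyclic where
  mul_assoc := by
    rintro ⟨n, m⟩ ⟨l, s⟩ ⟨p, q⟩
    simp only [mk_mul_mk, Bicyclic.mk.injEq]
    omega
  one_mul := by
    rintro ⟨n, m⟩
    simp [one_eq_mk, mk_mul_mk]
  mul_one := by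
    rintro ⟨n, m⟩
    simp [one_eq_mk, mk_mul_mk]

lemma mk_zero_one_mul_mk_one_zero : (⟨0, 1⟩ * ⟨1, 0⟩ : Bicyclic) = 1 :=
  rfl

lemma mk_one_zero_pow (n : ℕ) : (⟨1, 0⟩ : Bicyclic) ^ n = ⟨n, 0⟩ := by
  induction n with
  | zero => rfl
  | succ n ih => simp [pow_succ, ih, mk_mul_mk]

lemma mk_zero_one_pow (m : ℕ) : (⟨0, 1⟩ : Bicyclic) ^ m = ⟨0, m⟩ := by
  induction m with
  | zero => rfl
  | succ m ih => simp [pow_succ, ih, mk_mul_mk, add_comm]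

lemma mk_one_zero_pow_mul_mk_zero_one_pow_injective :
    Function.Injective fun p : ℕ × ℕ => (⟨1, 0⟩ ^ p.1 * ⟨0, 1⟩ ^ p.2 : Bicyclic) := by
  rintro ⟨n, m⟩ ⟨l, s⟩ h
  simpa [mk_one_zero_pow, mk_zero_one_pow, mk_mul_mk] using h

end Bicyclic

end BicyclicMonoid

section Bracket

lemma kdelta_comm (n m : ℕ) : kdelta n m = kdelta m n := by
  simp only [kdelta, eq_comm]

lemma theta_smul_Z_add_theta_smul_Z_sub (n m l s : ℕ) :
    theta ((l : ℤ) - m) • Z (l - m + n) s + theta ((m : ℤ) - l) • Z n (m - l + s)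
      - kdelta m l • Z n s = Z (n + (l - m)) (s + (m - l)) := by
  rcases lt_trichotomy m l with h | rfl | h
  · simp [theta, kdelta, h.le, h.not_ge, h.ne, Nat.sub_eq_zero_of_le, add_comm]
  · simp [theta, kdelta]
  · simp [theta, kdelta, h.le, h.not_ge, h.ne', Nat.sub_eq_zero_of_le, add_comm]

lemma zb_eq_sub (n m l s : ℕ) :
    zb (n, m) (l, s) = Z (n + (l - m)) (s + (m - l)) - Z (l + (n - s)) (m + (s - n)) := by
  rw [← theta_smul_Z_add_theta_smul_Z_sub n m l s, ← theta_smul_Z_add_theta_smul_Z_sub l s n m,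
    kdelta_comm s n, zb]
  abel

end Bracket

section Realization

variable {A : Type*} [Ring A] [Algebra ℂ A]

/-- The linear map `L_L → A` given by `Z_{n,m} ↦ a ^ n * b ^ m`; it realizes the bracket of `L_L` as
a commutator when `b` is a left inverse of `a`. -/
noncomputable def realization (a b : A) : LL →ₗ[ℂ] A :=
  Finsupp.linearCombination ℂ fun p : ℕ × ℕ => a ^ p.1 * b ^ p.2

lemma realization_Z (a b : A) (n m : ℕ) : realization a b (Z n m) = a ^ n * b ^ m := by
  simp [realization, Z]

lemma realization_E (a b : A) (i j : ℕ) :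
    realization a b (E i j) = shiftMatrixUnit a b i j := by
  rw [E, map_sub, realization_Z, realization_Z, shiftMatrixUnit_eq_sub]

variable {a b : A}

lemma realization_Z_mul_realization_Z (hba : b * a = 1) (n m l s : ℕ) :
    realization a b (Z n m) * realization a b (Z l s) =
      realization a b (Z (n + (l - m)) (s + (m - l))) := by
  simp only [realization_Z]
  calc a ^ n * b ^ m * (a ^ l * b ^ s) = a ^ n * (b ^ m * a ^ l) * b ^ s := by
        simp only [mul_assoc]
    _ = a ^ (n + (l - m)) * b ^ (s + (m - l)) := by
        rw [pow_mul_pow_of_mul_eq_one hba, add_comm s, pow_add, pow_add]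
        simp only [mul_assoc]

lemma realization_zb (hba : b * a = 1) (p q : ℕ × ℕ) :
    realization a b (zb p q) = ⁅a ^ p.1 * b ^ p.2, a ^ q.1 * b ^ q.2⁆ := by
  rw [zb_eq_sub, map_sub, ← realization_Z_mul_realization_Z hba,
    ← realization_Z_mul_realization_Z hba, Ring.lie_def]
  simp only [realization_Z]

theorem realization_br (hba : b * a = 1) (x y : LL) :
    realization a b (br x y) = ⁅realization a b x, realization a b y⁆ := by
  simp only [br, map_finsuppSum, map_smul, realization_zb hba]
  simp only [realization, Finsupp.linearCombination_apply, Finsupp.sum, Ring.lie_def,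
    Finset.sum_mul_sum, smul_mul_smul_comm, smul_sub, Finset.sum_sub_distrib]
  rw [Finset.sum_comm (s := y.support)]
  simp only [mul_comm (y _)]

lemma coeff_realization_of {M : Type*} [Monoid M] (a b : M) (x : LL) :
    (realization (MonoidAlgebra.of ℂ M a) (MonoidAlgebra.of ℂ M b) x).coeff =
      x.mapDomain fun p => a ^ p.1 * b ^ p.2 := by
  simp only [realization, Finsupp.linearCombination_apply, ← map_pow, ← map_mul]
  simp [Finsupp.mapDomain, Finsupp.sum]

lemma realization_of_injective {M : Type*} [Monoid M] {a b : M}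
    (hab : Function.Injective fun p : ℕ × ℕ => a ^ p.1 * b ^ p.2) :
    Function.Injective (realization (MonoidAlgebra.of ℂ M a) (MonoidAlgebra.of ℂ M b)) := by
  intro x y hxy
  apply Finsupp.mapDomain_injective hab
  rw [← coeff_realization_of, ← coeff_realization_of, hxy]

theorem exists_realization_injective :
    ∃ a b : MonoidAlgebra ℂ Bicyclic,
      b * a = 1 ∧ Function.Injective (realization a b) := by
  refine ⟨MonoidAlgebra.of ℂ _ ⟨1, 0⟩, MonoidAlgebra.of ℂ _ ⟨0, 1⟩, ?_,
    realization_of_injective Bicyclic.mk_one_zero_pow_mul_mk_zero_one_pow_injective⟩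
  rw [← map_mul, Bicyclic.mk_zero_one_mul_mk_one_zero, map_one]

end Realization

/-- The elements `E_{i,j}` satisfy the matrix-unit commutation
relations `[E_{i,j}, E_{r,k}] = δ_{j,r} E_{i,k} − δ_{k,i} E_{r,j}`. -/
theorem E_matrix_unit_relations (i j r k : ℕ) :
    br (E i j) (E r k) = kdelta j r • E i k - kdelta k i • E r j := by
  obtain ⟨a, b, hba, realization_injective⟩ := exists_realization_injective
  apply realization_injective
  calc realization a b (br (E i j) (E r k))
      = ⁅shiftMatrixUnit a b i j, shiftMatrixUnit a b r k⁆ := by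
        rw [realization_br hba, realization_E, realization_E]
    _ = kdelta j r • shiftMatrixUnit a b i k - kdelta k i • shiftMatrixUnit a b r j := by
        simp only [Ring.lie_def, shiftMatrixUnit_mul hba, kdelta, ite_smul, one_smul, zero_smul]
    _ = realization a b (kdelta j r • E i k - kdelta k i • E r j) := by
        rw [map_sub, map_smul, map_smul, realization_E, realization_E]
end

section
/- The action of L_L on the vector space S = ⊕_{k≥0} ℂ t_k determined on generators by Z_{n,m}·t_k = t_{k−m+n} if m ≤ k and Z_{n,m}·t_k = 0 if m > k defines a representation of the Lie algebra L_L on S: for all x, y ∈ L_L and v ∈ S, [x,y]·v = x·(y·v) − y·(x·v). -/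
/-- The module `S = ⊕_{k ≥ 0} ℂ t_k`, realized as finitely supported functions `ℕ → ℂ`. -/
abbrev SMod : Type := ℕ →₀ ℂ

/-- The basis element `t_k` of `S`. -/
noncomputable def tGen (k : ℕ) : SMod := Finsupp.single k 1

/-- The bilinear action of `L_L` on `S`, determined on generators by
`Z_{n,m}·t_k = t_{k−m+n}` if `m ≤ k` and `Z_{n,m}·t_k = 0` if `m > k`. -/
noncomputable def act (x : LL) (v : SMod) : SMod :=
  x.sum fun p a => v.sum fun k c =>
    (a * c) • (if p.2 ≤ k then tGen (k - p.2 + p.1) else 0)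

/-!
Let `u` shift `t_k` to `t_{k+1}` and let `d` shift `t_{k+1}` to `t_k` and kill `t_0`, so that
`d * u = 1`. Then `Z_{n,m}` acts as `u ^ n * d ^ m`. In any algebra the relation `d * u = 1` gives
`d ^ m * u ^ l = u ^ (l - m) * d ^ (m - l)` with truncated subtractions, so these monomials multiply
as in the bicyclic monoid, and (e1) is exactly the commutator of that multiplication.
-/

section Bicyclic

/-- The multiplication of the bicyclic monoid `⟨u, d ∣ d * u = 1⟩`, where the pair `(n, m)` encodes
the normal form `u ^ n * d ^ m`. At most one of the two truncated subtractions
is nonzero. -/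
def bicyclicMul (p q : ℕ × ℕ) : ℕ × ℕ :=
  (q.1 - p.2 + p.1, p.2 - q.1 + q.2)

theorem theta_smul_Z_add_sub_eq_Z_bicyclicMul (n m l s : ℕ) :
    theta ((l : ℤ) - m) • Z (l - m + n) s + theta ((m : ℤ) - l) • Z n (m - l + s)
        - kdelta m l • Z n s =
      Z (bicyclicMul (n, m) (l, s)).1 (bicyclicMul (n, m) (l, s)).2 := by
  rcases lt_trichotomy m l with h | rfl | h
  · simp [theta, kdelta, bicyclicMul, h.le, h.ne, h.not_ge, Nat.sub_eq_zero_of_le]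
  · simp [theta, kdelta, bicyclicMul]
  · simp [theta, kdelta, bicyclicMul, h.le, h.ne', h.not_ge, Nat.sub_eq_zero_of_le]

theorem zb_eq_Z_bicyclicMul_sub_Z_bicyclicMul (p q : ℕ × ℕ) :
    zb p q = Z (bicyclicMul p q).1 (bicyclicMul p q).2
      - Z (bicyclicMul q p).1 (bicyclicMul q p).2 := by
  obtain ⟨n, m⟩ := p
  obtain ⟨l, s⟩ := q
  have kdelta_symm : kdelta s n = kdelta n s := by simp only [kdelta, eq_comm]
  rw [← theta_smul_Z_add_sub_eq_Z_bicyclicMul, ← theta_smul_Z_add_sub_eq_Z_bicyclicMul,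
    kdelta_symm, zb]
  abel

variable {M : Type*} [Monoid M] {u d : M}

theorem pow_mul_pow_of_mul_eq_one_s13 (hdu : d * u = 1) (m l : ℕ) :
    d ^ m * u ^ l = u ^ (l - m) * d ^ (m - l) := by
  rcases le_total m l with h | h
  · obtain ⟨k, rfl⟩ := Nat.exists_eq_add_of_le h
    simp [pow_add, ← mul_assoc, pow_mul_pow_eq_one m hdu]
  · obtain ⟨k, rfl⟩ := Nat.exists_eq_add_of_le' h
    simp [pow_add, mul_assoc, pow_mul_pow_eq_one l hdu]

theorem pow_mul_pow_mul_pow_mul_pow_eq_bicyclicMul (hdu : d * u = 1) (p q : ℕ × ℕ) :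
    u ^ p.1 * d ^ p.2 * (u ^ q.1 * d ^ q.2) =
      u ^ (bicyclicMul p q).1 * d ^ (bicyclicMul p q).2 :=
  calc
    u ^ p.1 * d ^ p.2 * (u ^ q.1 * d ^ q.2) = u ^ p.1 * (d ^ p.2 * u ^ q.1) * d ^ q.2 := by
      simp only [mul_assoc]
    _ = u ^ p.1 * (u ^ (q.1 - p.2) * d ^ (p.2 - q.1)) * d ^ q.2 := by
      rw [pow_mul_pow_of_mul_eq_one_s13 hdu]
    _ = u ^ (bicyclicMul p q).1 * d ^ (bicyclicMul p q).2 := by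
      simp only [bicyclicMul, add_comm _ p.1, pow_add, mul_assoc]

end Bicyclic

theorem sum_sum_mul_smul_single_one_eq {R M ι κ : Type*} [CommSemiring R] [AddCommMonoid M]
    [Module R M] (B : (ι →₀ R) →ₗ[R] (κ →₀ R) →ₗ[R] M) (x : ι →₀ R) (y : κ →₀ R) :
    (x.sum fun i a => y.sum fun j b =>
      (a * b) • B (Finsupp.single i 1) (Finsupp.single j 1)) = B x y := by
  simpa [mul_smul] using LinearMap.sum_repr_mul_repr_mul Finsupp.basisSingleOne
    Finsupp.basisSingleOne x y (B := B)

section NormalOrder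

variable {A : Type*}

/-- The linear map `Z_{n,m} ↦ u ^ n * d ^ m` from `L_L` to an algebra. For `d * u = 1` it
carries the bracket of `L_L` to the commutator. -/
noncomputable def normalOrder [Semiring A] [Algebra ℂ A] (u d : A) : LL →ₗ[ℂ] A :=
  Finsupp.linearCombination ℂ fun p => u ^ p.1 * d ^ p.2

theorem normalOrder_Z [Semiring A] [Algebra ℂ A] (u d : A) (n m : ℕ) :
    normalOrder u d (Z n m) = u ^ n * d ^ m := by
  simp [normalOrder, Z]

variable [Ring A] [Algebra ℂ A] {u d : A}

theorem normalOrder_zb (hdu : d * u = 1) (p q : ℕ × ℕ) :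
    normalOrder u d (zb p q) =
      ⁅normalOrder u d (Z p.1 p.2), normalOrder u d (Z q.1 q.2)⁆ := by
  simp only [zb_eq_Z_bicyclicMul_sub_Z_bicyclicMul, map_sub, normalOrder_Z, Ring.lie_def,
    pow_mul_pow_mul_pow_mul_pow_eq_bicyclicMul hdu]

theorem normalOrder_br (hdu : d * u = 1) (x y : LL) :
    normalOrder u d (br x y) = ⁅normalOrder u d x, normalOrder u d y⁆ := by
  let commutator : LL →ₗ[ℂ] LL →ₗ[ℂ] A :=
    (LinearMap.mul ℂ A - (LinearMap.mul ℂ A).flip).compl₁₂ (normalOrder u d) (normalOrder u d)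
  calc
    normalOrder u d (br x y) =
        x.sum fun p a => y.sum fun q b => (a * b) • commutator (Z p.1 p.2) (Z q.1 q.2) := by
      simp only [br, map_finsuppSum, map_smul, normalOrder_zb hdu]
      rfl
    _ = ⁅normalOrder u d x, normalOrder u d y⁆ := sum_sum_mul_smul_single_one_eq commutator x y

end NormalOrder

section Shift

/-- The raising operator `t_k ↦ t_{k+1}` on `S`. -/
noncomputable def raise : Module.End ℂ SMod := Finsupp.lmapDomain ℂ ℂ (· + 1)

/-- The lowering operator `t_{k+1} ↦ t_k`, `t_0 ↦ 0` on `S`, given on coordinates by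
`(lower v) k = v (k + 1)`. -/
noncomputable def lower : Module.End ℂ SMod :=
  Finsupp.lcomapDomain (· + 1) (add_left_injective 1)

theorem lower_mul_raise : lower * raise = 1 :=
  LinearMap.ext <| Finsupp.leftInverse_lcomapDomain_mapDomain (R := ℂ) _ (add_left_injective 1)

theorem raise_pow_tGen (n k : ℕ) : (raise ^ n) (tGen k) = tGen (k + n) := by
  induction n with
  | zero => rfl
  | succ n ih => rw [pow_succ', Module.End.mul_apply, ih]; simp [raise, tGen, add_assoc]

theorem lower_pow_apply (m : ℕ) (v : SMod) (k : ℕ) : (lower ^ m) v k = v (k + m) := by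
  induction m generalizing v with
  | zero => rfl
  | succ m ih => rw [pow_succ, Module.End.mul_apply, ih]; rfl

theorem lower_pow_tGen (m k : ℕ) :
    (lower ^ m) (tGen k) = if m ≤ k then tGen (k - m) else 0 := by
  ext j
  rw [lower_pow_apply]
  split_ifs <;> simp only [tGen, Finsupp.single_apply, Finsupp.zero_apply] <;> grind

theorem normalOrder_raise_lower_Z_tGen (n m k : ℕ) :
    normalOrder raise lower (Z n m) (tGen k) = if m ≤ k then tGen (k - m + n) else 0 := by
  rw [normalOrder_Z, Module.End.mul_apply, lower_pow_tGen, apply_ite (raise ^ n), raise_pow_tGen,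
    map_zero]

theorem act_eq_normalOrder (x : LL) (v : SMod) : act x v = normalOrder raise lower x v := by
  simp only [act, ← normalOrder_raise_lower_Z_tGen]
  exact sum_sum_mul_smul_single_one_eq (normalOrder raise lower) x v

end Shift

/-- The action of `L_L` on `S` is a Lie algebra representation:
`[x,y]·v = x·(y·v) − y·(x·v)`. -/
theorem act_is_representation :
    ∀ (x y : LL) (v : SMod), act (br x y) v = act x (act y v) - act y (act x v) := by
  intro x y v
  have map_bracket : normalOrder raise lower (br x y) =
      ⁅normalOrder raise lower x, normalOrder raise lower y⁆ :=
    normalOrder_br (A := Module.End ℂ SMod) lower_mul_raise x y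
  simp only [act_eq_normalOrder, map_bracket, Ring.lie_def, LinearMap.sub_apply,
    Module.End.mul_apply]
end
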